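/- arXiv:1010.1225 — 3 statements merged into one kernel-verified Lean document; each statement's English description precedes it below -/
import Mathlib

section
/- Let (X, T) be an L-fuzzy topological space and G ∈ L^X. Then G is L-fuzzy SP-compact if and only if for every a ∈ M(L), every strong a-remote family P of G with ⋀_{F∈P} T_sp*(F) ≰ a' has a finite subfamily H ⊆ P which is a strong a-remote family of G. -/
/-!
Complementing by the involution `c` turns a family `P` into the family of complements, turns the
coprime `a` into the prime `c a`, and turns "`P` is a strong `a`-remote family of `G`" into
"`⨅ x, c (G x) ⊔ ⨆ F, F x ≰ c a`" over the complemented family (`strongRemote_iff`).  So the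
remote-family condition says: for every prime `p` and every family `P`, if
`⨅ F ∈ P, spOp c T F ≰ p` and `⨅ x, c (G x) ⊔ ⨆ F ∈ P, F x ≰ p`, then some finite subfamily `Q`
has `⨅ x, c (G x) ⊔ ⨆ F ∈ Q, F x ≰ p`.

For prime `p`, an infimum of two elements is `≰ p` exactly when both are, so this is the inequality
defining SP-compactness, tested against primes only.  Testing against primes suffices because in a
completely distributive lattice the primes separate points (`exists_isPrimeElem`): if `z ≰ w`, some
prime lies above `w` but not above `z`.  That lemma comes from an interpolating sequence
`z ≫ x₁ ≫ x₂ ≫ ⋯` staying `≰ w`; an element above `w` that is maximal among those dominating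
no `xₙ` exists by Zorn's lemma and is prime.
-/

/-!
Common definitions: completely distributive complete lattice `L` with an
order-reversing involution `c`, `L`-subsets `X → L`, the wayBelow relation `≪`,
coprime/prime elements, `L`-(fuzzy) topologies, closure/interior, (Semi-)Preopen
subsets, the `L`-fuzzy Preopen and Semi-Preopen operators, and the various
compactness / cover / shading / remote-family notions.
-/

variable {L : Type*} [CompletelyDistribLattice L] {X : Type*}

/-- `a ≪ b`: for every subset `D ⊆ L` with `b ≤ sSup D` there is `d ∈ D` with `a ≤ d`. -/
def wayBelow (a b : L) : Prop := ∀ D : Set L, b ≤ sSup D → ∃ d ∈ D, a ≤ d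

/-- coprime (non-zero) element of `L`; `M(L)` is the set of such elements. -/
def IsCoprimeElem (a : L) : Prop := a ≠ ⊥ ∧ ∀ p q : L, a ≤ p ⊔ q → a ≤ p ∨ a ≤ q

/-- prime (non-unit) element of `L`; `P(L)` is the set of such elements. -/
def IsPrimeElem (p : L) : Prop := p ≠ ⊤ ∧ ∀ a b : L, a ⊓ b ≤ p → a ≤ p ∨ b ≤ p

/-- pointwise complement of an `L`-subset via the involution `c`. -/
def pcompl (c : L → L) (A : X → L) : X → L := fun x => c (A x)

/-- `T : L^X → L` is an `L`-fuzzy topology. -/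
def IsLFuzzyTopology (T : (X → L) → L) : Prop :=
  T ⊥ = ⊤ ∧ T ⊤ = ⊤ ∧ (∀ A B : X → L, T A ⊓ T B ≤ T (A ⊓ B)) ∧
    (∀ S : Set (X → L), (⨅ A ∈ S, T A) ≤ T (sSup S))

/-- `τ ⊆ L^X` is an `L`-topology. -/
def IsLTopology (τ : Set (X → L)) : Prop :=
  ⊥ ∈ τ ∧ ⊤ ∈ τ ∧ (∀ S : Set (X → L), S ⊆ τ → sSup S ∈ τ) ∧
    (∀ A B : X → L, A ∈ τ → B ∈ τ → A ⊓ B ∈ τ)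

/-- closure in an `L`-topological space: infimum of all closed `L`-subsets above `A`. -/
def lcl (c : L → L) (τ : Set (X → L)) (A : X → L) : X → L :=
  sInf {K : X → L | pcompl c K ∈ τ ∧ A ≤ K}

/-- interior in an `L`-topological space: supremum of all open `L`-subsets below `A`. -/
def lint (τ : Set (X → L)) (A : X → L) : X → L :=
  sSup {U : X → L | U ∈ τ ∧ U ≤ A}

/-- `A` is Preopen: `A ≤ int (cl A)`. -/
def IsPreopen (c : L → L) (τ : Set (X → L)) (A : X → L) : Prop :=
  A ≤ lint τ (lcl c τ A)

/-- `A` is Semi-Preopen: there is a Preopen `B` with `B ≤ A ≤ cl B`. -/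
def IsSemiPreopen (c : L → L) (τ : Set (X → L)) (A : X → L) : Prop :=
  ∃ B : X → L, IsPreopen c τ B ∧ B ≤ A ∧ A ≤ lcl c τ B

/-- the `L`-fuzzy Preopen operator `T_p` induced by `T`. -/
def preopenOp (c : L → L) (T : (X → L) → L) (A : X → L) : L :=
  ⨅ x : X, ⨅ lam : L, ⨅ _ : wayBelow lam (A x),
    ⨆ B : X → L, ⨆ _ : wayBelow lam (B x),
      (T B ⊓ ⨅ y : X, ⨅ mu : L, ⨅ _ : wayBelow mu (B y),
        ⨅ D : X → L, ⨅ _ : A ≤ D, ⨅ _ : ¬ mu ≤ D y, c (T (pcompl c D)))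

/-- the `L`-fuzzy Semi-Preopen operator `T_sp` induced by `T`. -/
def spOp (c : L → L) (T : (X → L) → L) (A : X → L) : L :=
  ⨆ B : X → L, ⨆ _ : B ≤ A,
    (preopenOp c T B ⊓ ⨅ x : X, ⨅ lam : L, ⨅ _ : wayBelow lam (A x),
      ⨅ D : X → L, ⨅ _ : B ≤ D, ⨅ _ : ¬ lam ≤ D x, c (T (pcompl c D)))

/-- `G` is `L`-fuzzy SP-compact in the `L`-fuzzy topological space `(X, T)`. -/
def LFuzzySPCompact (c : L → L) (T : (X → L) → L) (G : X → L) : Prop :=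
  ∀ P : Set (X → L),
    (⨅ F ∈ P, spOp c T F) ⊓ (⨅ x : X, c (G x) ⊔ ⨆ F ∈ P, F x) ≤
      ⨆ Q : Finset (X → L), ⨆ _ : ↑Q ⊆ P, ⨅ x : X, c (G x) ⊔ ⨆ F ∈ Q, F x

/-- `G` is fuzzy SP-compact in the `L`-topological space `(X, τ)`. -/
def FuzzySPCompact (c : L → L) (τ : Set (X → L)) (G : X → L) : Prop :=
  ∀ U : Set (X → L), (∀ A ∈ U, IsSemiPreopen c τ A) →
    (⨅ x : X, c (G x) ⊔ ⨆ A ∈ U, A x) ≤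
      ⨆ ψ : Finset (X → L), ⨆ _ : ↑ψ ⊆ U, ⨅ x : X, c (G x) ⊔ ⨆ A ∈ ψ, A x

/-- `U` is a `Q_a`-cover of `G`. -/
def QCover (c : L → L) (a : L) (G : X → L) (U : Set (X → L)) : Prop :=
  ∀ x : X, a ≤ c (G x) ⊔ ⨆ A ∈ U, A x

/-- `U` is a strong `β_a`-cover of `G`. -/
def StrongBetaCover (c : L → L) (a : L) (G : X → L) (U : Set (X → L)) : Prop :=
  wayBelow a (⨅ x : X, c (G x) ⊔ ⨆ A ∈ U, A x)

/-- `P` is a strong `a`-remote family of `G`. -/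
def StrongRemote (a : L) (G : X → L) (P : Set (X → L)) : Prop :=
  ¬ a ≤ ⨆ x : X, G x ⊓ ⨅ B ∈ P, B x

/-- `U` is a strong `a`-shading of `G`. -/
def StrongShading (c : L → L) (a : L) (G : X → L) (U : Set (X → L)) : Prop :=
  ¬ (⨅ x : X, c (G x) ⊔ ⨆ A ∈ U, A x) ≤ a

/-- `G` is `a`-fuzzy SP-compact in the `L`-topological space `(X, τ)`. -/
def AFuzzySPCompact (c : L → L) (τ : Set (X → L)) (a : L) (G : X → L) : Prop :=
  ∀ b : L, wayBelow b a →
    ∀ U : Set (X → L), (∀ A ∈ U, IsSemiPreopen c τ A) → QCover c a G U →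
      ∃ V : Finset (X → L), ↑V ⊆ U ∧ QCover c b G ↑V

/-- Every element is the supremum of the elements way below it: this is complete distributivity
applied to all families `D` with `z ≤ sSup D`. -/
lemma le_sSup_wayBelow (z : L) : z ≤ sSup {b : L | wayBelow b z} := by
  have h1 : z ≤ ⨅ D : {D : Set L // z ≤ sSup D}, ⨆ d : D.1, (d : L) := by
    refine le_iInf fun D => ?_
    rw [← sSup_eq_iSup']
    exact D.2
  rw [iInf_iSup_eq] at h1
  refine h1.trans (iSup_le fun g => le_sSup ?_)
  intro D hD
  exact ⟨g ⟨D, hD⟩, (g ⟨D, hD⟩).2, iInf_le (fun D => ((g D : D.1) : L)) ⟨D, hD⟩⟩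

lemma wayBelow.le {a b : L} (h : wayBelow a b) : a ≤ b := by
  obtain ⟨d, hd, had⟩ := h {b} (by simp)
  rw [Set.mem_singleton_iff] at hd
  exact hd ▸ had

lemma wayBelow.interpolate {b z : L} (h : wayBelow b z) :
    ∃ x, wayBelow b x ∧ wayBelow x z := by
  obtain ⟨y, ⟨x, hyx, hxz⟩, hby⟩ := h {y | ∃ x, wayBelow y x ∧ wayBelow x z} <| by
    refine (le_sSup_wayBelow z).trans (sSup_le fun x hx => ?_)
    exact (le_sSup_wayBelow x).trans (sSup_le_sSup fun y hy => ⟨x, hy, hx⟩)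
  refine ⟨x, fun D hD => ?_, hxz⟩
  obtain ⟨d, hd, hyd⟩ := hyx D hD
  exact ⟨d, hd, hby.trans hyd⟩

/-- Primes separate points in a completely distributive lattice. -/
lemma exists_isPrimeElem {z w : L} (hzw : ¬ z ≤ w) :
    ∃ p : L, IsPrimeElem p ∧ w ≤ p ∧ ¬ z ≤ p := by
  obtain ⟨b, hbz, hbw⟩ : ∃ b, wayBelow b z ∧ ¬ b ≤ w := by
    by_contra! h
    exact hzw ((le_sSup_wayBelow z).trans (sSup_le h))
  -- A sequence descending from `z` along `≪`, all of whose terms stay above `b`.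
  choose f hf1 hf2 using fun y : {y : L // wayBelow b y} => y.2.interpolate
  let x : ℕ → {y : L // wayBelow b y} := fun n => n.rec ⟨z, hbz⟩ fun _ y => ⟨f y, hf1 y⟩
  have hx : ∀ n : ℕ, wayBelow (x (n + 1)).1 (x n).1 := fun n => hf2 (x n)
  have hanti : Antitone fun n : ℕ => (x n).1 := antitone_nat_of_succ_le fun n => (hx n).le
  obtain ⟨p, hwp, hp⟩ := zorn_le_nonempty₀ {q : L | ∀ n, ¬ (x n).1 ≤ q}
    (fun C hC _ _ _ => ⟨sSup C, fun n hn => by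
      obtain ⟨d, hd, hxd⟩ := hx n C hn
      exact hC hd (n + 1) hxd, fun _ => le_sSup⟩)
    w (fun n hn => hbw ((x n).2.le.trans hn))
  refine ⟨p, ⟨fun h => hp.prop 0 (h ▸ le_top), fun s t hst => ?_⟩, hwp, hp.prop 0⟩
  by_contra! h
  -- By maximality, joining `p` with an element not below it dominates some term.
  have key : ∀ s : L, ¬ s ≤ p → ∃ n, (x n).1 ≤ s ⊔ p := fun s hs => by
    by_contra! hn
    exact hs (le_sup_left.trans (hp.le_of_ge hn le_sup_right))
  obtain ⟨m, hm⟩ := key s h.1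
  obtain ⟨n, hn⟩ := key t h.2
  apply hp.prop (max m n)
  calc (x (max m n)).1 ≤ (s ⊔ p) ⊓ (t ⊔ p) :=
        le_inf ((hanti (le_max_left m n)).trans hm) ((hanti (le_max_right m n)).trans hn)
    _ = s ⊓ t ⊔ p := (sup_inf_right s t p).symm
    _ ≤ p := sup_le hst le_rfl

/-- The De Morgan law, via `c` as an order isomorphism from `L` to its dual. -/
lemma compl_iSup_inf_iInf (c : L → L) (hc_inv : ∀ a : L, c (c a) = a)
    (hc_anti : ∀ a b : L, a ≤ b → c b ≤ c a) (G : X → L) (P : Set (X → L)) :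
    c (⨆ x, G x ⊓ ⨅ B ∈ P, B x) = ⨅ x, c (G x) ⊔ ⨆ B ∈ P, c (B x) := by
  have hle : ∀ a b : L, c a ≤ c b ↔ b ≤ a := fun a b =>
    ⟨fun h => by simpa only [hc_inv] using hc_anti _ _ h, hc_anti _ _⟩
  let e : L ≃o Lᵒᵈ :=
    { toFun := fun a => OrderDual.toDual (c a)
      invFun := fun a => c (OrderDual.ofDual a)
      left_inv := hc_inv
      right_inv := hc_inv
      map_rel_iff' := fun {a b} => hle b a }
  have h : e (⨆ x, G x ⊓ ⨅ B ∈ P, B x) = ⨆ x, e (G x) ⊓ ⨅ B ∈ P, e (B x) := by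
    simp only [e.map_iSup, e.map_inf, e.map_iInf]
  exact h

/-- A strong `a`-remote family is one whose family of complements is a strong `c a`-shading. -/
lemma strongRemote_iff (c : L → L) (hc_inv : ∀ a : L, c (c a) = a)
    (hc_anti : ∀ a b : L, a ≤ b → c b ≤ c a) (a : L) (G : X → L) (P : Set (X → L)) :
    StrongRemote a G P ↔ ¬ (⨅ x, c (G x) ⊔ ⨆ B ∈ P, pcompl c B x) ≤ c a := by
  refine not_congr ?_
  change _ ↔ (⨅ x, c (G x) ⊔ ⨆ B ∈ P, c (B x)) ≤ c a
  rw [← compl_iSup_inf_iInf c hc_inv hc_anti]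
  exact ⟨hc_anti _ _, fun h => by simpa only [hc_inv] using hc_anti _ _ h⟩

lemma pcompl_pcompl {M Y : Type*} (c : M → M) (hc_inv : ∀ a : M, c (c a) = a) (A : Y → M) :
    pcompl c (pcompl c A) = A := funext fun x => hc_inv (A x)

lemma IsPrimeElem.isCoprimeElem_compl (c : L → L) (hc_inv : ∀ a : L, c (c a) = a)
    (hc_anti : ∀ a b : L, a ≤ b → c b ≤ c a) {p : L} (hp : IsPrimeElem p) :
    IsCoprimeElem (c p) := by
  have hle : ∀ {s t : L}, c s ≤ t → c t ≤ s := fun h => by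
    simpa only [hc_inv] using hc_anti _ _ h
  refine ⟨fun h => hp.1 (top_le_iff.1 ?_), fun s t hst => ?_⟩
  · have := hle (h.le.trans (bot_le : ⊥ ≤ c ⊤))
    simpa only [hc_inv] using this
  · refine (hp.2 (c s) (c t) (le_trans ?_ (hle hst))).imp (fun h => ?_) (fun h => ?_)
    · rw [← hc_inv (c s ⊓ c t)]
      refine hc_anti _ _ (sup_le ?_ ?_)
      · simpa only [hc_inv] using hc_anti _ _ (inf_le_left : c s ⊓ c t ≤ c s)
      · simpa only [hc_inv] using hc_anti _ _ (inf_le_right : c s ⊓ c t ≤ c t)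
    · exact hle h
    · exact hle h

lemma IsCoprimeElem.isPrimeElem_compl (c : L → L) (hc_inv : ∀ a : L, c (c a) = a)
    (hc_anti : ∀ a b : L, a ≤ b → c b ≤ c a) {a : L} (ha : IsCoprimeElem a) :
    IsPrimeElem (c a) := by
  have hle : ∀ {s t : L}, s ≤ c t → t ≤ c s := fun h => by
    simpa only [hc_inv] using hc_anti _ _ h
  refine ⟨fun h => ha.1 (le_bot_iff.1 ?_), fun s t hst => ?_⟩
  · have := hle ((le_top : c ⊥ ≤ ⊤).trans h.ge)
    simpa only [hc_inv] using this
  · refine (ha.2 (c s) (c t) ((hle hst).trans ?_)).imp (fun h => ?_) (fun h => ?_)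
    · rw [← hc_inv (c s ⊔ c t)]
      refine hc_anti _ _ (le_inf ?_ ?_)
      · simpa only [hc_inv] using hc_anti _ _ (le_sup_left : c s ≤ c s ⊔ c t)
      · simpa only [hc_inv] using hc_anti _ _ (le_sup_right : c t ≤ c s ⊔ c t)
    · exact hle h
    · exact hle h

theorem stmt5 (c : L → L) (hc_inv : ∀ a : L, c (c a) = a)
    (hc_anti : ∀ a b : L, a ≤ b → c b ≤ c a) (T : (X → L) → L) (hT : IsLFuzzyTopology T) (G : X → L) :
    LFuzzySPCompact c T G ↔
      ∀ a : L, IsCoprimeElem a → ∀ P : Set (X → L), StrongRemote a G P →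
        ¬ (⨅ F ∈ P, spOp c T (pcompl c F)) ≤ c a →
          ∃ H : Finset (X → L), ↑H ⊆ P ∧ StrongRemote a G ↑H := by
  classical
  constructor
  · intro hG a ha P hP hT'
    rw [strongRemote_iff c hc_inv hc_anti] at hP
    have hprime := ha.isPrimeElem_compl c hc_inv hc_anti
    have h := hG (pcompl c '' P)
    simp only [iInf_image, iSup_image] at h
    obtain ⟨Q, hQP, hQ⟩ : ∃ Q : Finset (X → L), ↑Q ⊆ pcompl c '' P ∧
        ¬ (⨅ x : X, c (G x) ⊔ ⨆ F ∈ Q, F x) ≤ c a := by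
      by_contra! hn
      exact (hprime.2 _ _ (h.trans (iSup₂_le hn))).elim hT' hP
    refine ⟨Q.image (pcompl c), ?_, ?_⟩
    · intro F hF
      obtain ⟨F', hF', rfl⟩ := Finset.mem_image.1 (Finset.mem_coe.1 hF)
      obtain ⟨A, hA, rfl⟩ := hQP hF'
      rwa [pcompl_pcompl c hc_inv]
    · rw [strongRemote_iff c hc_inv hc_anti, Finset.coe_image]
      simpa only [iSup_image, pcompl_pcompl c hc_inv, Finset.mem_coe] using hQ
  · intro h P
    by_contra hn
    obtain ⟨p, hp, hwp, hzp⟩ := exists_isPrimeElem hn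
    obtain ⟨H, hHP, hH⟩ := h (c p) (hp.isCoprimeElem_compl c hc_inv hc_anti) (pcompl c '' P)
      (by
        rw [strongRemote_iff c hc_inv hc_anti]
        simp only [iSup_image, pcompl_pcompl c hc_inv, hc_inv]
        exact fun hle => hzp (inf_le_right.trans hle))
      (by
        simp only [iInf_image, pcompl_pcompl c hc_inv, hc_inv]
        exact fun hle => hzp (inf_le_left.trans hle))
    rw [strongRemote_iff c hc_inv hc_anti, hc_inv] at hH
    refine hH (le_trans ?_ hwp)
    refine le_trans ?_ (le_iSup₂_of_le (H.image (pcompl c)) ?_ le_rfl)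
    · simp only [Finset.mem_coe, Finset.iSup_finset_image, le_refl]
    · intro F hF
      obtain ⟨F', hF', rfl⟩ := Finset.mem_image.1 (Finset.mem_coe.1 hF)
      obtain ⟨A, hA, rfl⟩ := hHP hF'
      rwa [pcompl_pcompl c hc_inv]
end

section
/- Let (X, T) be an L-fuzzy topological space and G ∈ L^X. Then G is L-fuzzy SP-compact if and only if for every a ∈ P(L) and every strong a-shading U of G with ⋀_{F∈U} T_sp(F) ≰ a, there exist a finite subfamily V ⊆ U and b ∈ α*(a) such that V is a strong b-shading of G. -/
/-!
The theorem rests on two facts about a completely distributive lattice: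

* every element is the supremum of the elements way below it (`exists_wayBelow_not_le`);
* primes separate: if `s ≰ t`, some prime `p ≥ t` satisfies `s ≰ p` (`exists_prime_not_le`).

Applying the first fact to `c a` and the second to its output gives, for `s ≰ a`, a prime `b` with
`c b ≪ c a` and still `s ≰ b` (`exists_prime_wayBelow_not_le`).

If `G` is SP-compact and `a` is prime, then the two conditions on `U` say that neither factor of the
meet in the compactness inequality lies below `a`, so the meet does not, and some finite `V ⊆ U` is
a strong `a`-shading; the third lemma improves `a` to some `b ∈ α*(a)`. Conversely, if the
compactness inequality fails for `P`, separate its two sides by a prime `a`. Then `P` is a strong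
`a`-shading, and the resulting finite `V` and `b` contradict the fact that `b ∈ α*(a)` lies
above `a`, hence above the right-hand side of the inequality.
-/


/-!
Common definitions: completely distributive complete lattice `L` with an
order-reversing involution `c`, `L`-subsets `X → L`, the wayBelow relation `≪`,
coprime/prime elements, `L`-(fuzzy) topologies, closure/interior, (Semi-)Preopen
subsets, the `L`-fuzzy Preopen and Semi-Preopen operators, and the various
compactness / cover / shading / remote-family notions.
-/

variable {L : Type*} [CompletelyDistribLattice L] {X : Type*}

theorem wayBelow.le_of {r a : L} (h : wayBelow r a) : r ≤ a := by
  obtain ⟨d, hd, hr⟩ := h {a} (by simp)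
  exact hr.trans (le_of_eq hd)

/-- Complete distributivity in the form: every element is the supremum of those way below it. -/
theorem exists_wayBelow_not_le {a t : L} (h : ¬ a ≤ t) : ∃ r, wayBelow r a ∧ ¬ r ≤ t := by
  by_contra! H
  apply h
  have h1 : a ≤ ⨅ D : {D : Set L // a ≤ sSup D}, ⨆ d : D.1, (d : L) :=
    le_iInf fun D => D.2.trans (le_of_eq (sSup_eq_iSup' D.1))
  rw [iInf_iSup_eq] at h1
  refine h1.trans (iSup_le fun g => H _ fun D hD => ?_)
  exact ⟨g ⟨D, hD⟩, (g ⟨D, hD⟩).2, iInf_le _ (⟨D, hD⟩ : {D : Set L // a ≤ sSup D})⟩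

/-- Primes separate points. Choose a chain `s = s₀ ≫ s₁ ≫ …` of elements not below `t`; the
elements above no `sₙ` are closed under suprema of chains, so one of them is maximal
above `t`, and it is prime because the elements above some `sₙ` form a filter. -/
theorem exists_prime_not_le {s t : L} (h : ¬ s ≤ t) : ∃ p, IsPrimeElem p ∧ t ≤ p ∧ ¬ s ≤ p := by
  choose f hf using fun x : {x : L // ¬ x ≤ t} => exists_wayBelow_not_le x.2
  let g : {x : L // ¬ x ≤ t} → {x : L // ¬ x ≤ t} := fun x => ⟨f x, (hf x).2⟩
  let u : ℕ → {x : L // ¬ x ≤ t} := fun n => g^[n] ⟨s, h⟩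
  have hu : ∀ n, wayBelow (u (n + 1) : L) (u n : L) := fun n => by
    simp only [u, Function.iterate_succ_apply']
    exact (hf (g^[n] ⟨s, h⟩)).1
  have hanti : Antitone fun n => (u n : L) := antitone_nat_of_succ_le fun n => (hu n).le_of
  obtain ⟨p, htp, hp⟩ := zorn_le_nonempty₀ {x : L | ∀ n, ¬ (u n : L) ≤ x}
    (fun C hC _ _ _ => ⟨sSup C, fun n hn => by
      obtain ⟨d, hd, hle⟩ := hu n C hn
      exact hC hd _ hle, fun z hz => le_sSup hz⟩) t (fun n => (u n).2)
  have key : ∀ x, ¬ x ≤ p → ∃ n, (u n : L) ≤ p ⊔ x := by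
    intro x hx
    by_contra! H
    exact hx (le_sup_right.trans (hp.2 H le_sup_left))
  refine ⟨p, ⟨fun htop => hp.1 0 (htop ▸ le_top), fun x y hxy => ?_⟩, htp, hp.1 0⟩
  by_contra! H
  obtain ⟨n, hn⟩ := key x H.1
  obtain ⟨m, hm⟩ := key y H.2
  refine hp.1 (max n m) ?_
  calc (u (max n m) : L) ≤ (p ⊔ x) ⊓ (p ⊔ y) :=
        le_inf ((hanti (le_max_left n m)).trans hn) ((hanti (le_max_right n m)).trans hm)
    _ = p ⊔ x ⊓ y := sup_inf_left .. |>.symm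
    _ ≤ p := sup_le le_rfl hxy

/-- `a` is the infimum of `α*(a)`. -/
theorem exists_prime_wayBelow_not_le {c : L → L} (hc_inv : ∀ a : L, c (c a) = a)
    (hc_anti : ∀ a b : L, a ≤ b → c b ≤ c a) {s a : L} (h : ¬ s ≤ a) :
    ∃ b, wayBelow (c b) (c a) ∧ IsPrimeElem b ∧ ¬ s ≤ b := by
  have h1 : ¬ c a ≤ c s := fun h' => h (by simpa only [hc_inv] using hc_anti _ _ h')
  obtain ⟨r, hr, hrs⟩ := exists_wayBelow_not_le h1
  have h2 : ¬ s ≤ c r := fun h' => hrs (by simpa only [hc_inv] using hc_anti _ _ h')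
  obtain ⟨p, hp, hrp, hsp⟩ := exists_prime_not_le h2
  have h3 : c p ≤ r := by simpa only [hc_inv] using hc_anti _ _ hrp
  refine ⟨p, fun D hD => ?_, hp, hsp⟩
  obtain ⟨d, hd, hle⟩ := hr D hD
  exact ⟨d, hd, h3.trans hle⟩

theorem stmt8 (c : L → L) (hc_inv : ∀ a : L, c (c a) = a)
    (hc_anti : ∀ a b : L, a ≤ b → c b ≤ c a) (T : (X → L) → L) (hT : IsLFuzzyTopology T) (G : X → L) :
    LFuzzySPCompact c T G ↔
      ∀ a : L, IsPrimeElem a → ∀ U : Set (X → L), StrongShading c a G U →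
        ¬ (⨅ F ∈ U, spOp c T F) ≤ a →
          ∃ V : Finset (X → L), ↑V ⊆ U ∧
            ∃ b : L, wayBelow (c b) (c a) ∧ IsPrimeElem b ∧ StrongShading c b G ↑V := by
  constructor
  · intro H a ha U hU hsp
    have h1 : ¬ (⨆ Q : Finset (X → L), ⨆ _ : ↑Q ⊆ U, ⨅ x : X, c (G x) ⊔ ⨆ F ∈ Q, F x) ≤ a :=
      fun h => (ha.2 _ _ ((H U).trans h)).elim hsp hU
    rw [iSup₂_le_iff] at h1; push Not at h1
    obtain ⟨V, hV, hVa⟩ := h1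
    obtain ⟨b, hb, hbp, hVb⟩ := exists_prime_wayBelow_not_le hc_inv hc_anti hVa
    exact ⟨V, hV, b, hb, hbp, hVb⟩
  · intro H P
    by_contra hP
    obtain ⟨a, ha, hWa, hPa⟩ := exists_prime_not_le hP
    obtain ⟨V, hV, b, hb, -, hVb⟩ := H a ha P (fun h => hPa (inf_le_right.trans h))
      (fun h => hPa (inf_le_left.trans h))
    have hab : a ≤ b := by simpa only [hc_inv] using hc_anti _ _ hb.le_of
    exact hVb ((le_iSup₂_of_le (f := fun (Q : Finset (X → L)) (_ : ↑Q ⊆ P) =>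
      ⨅ x : X, c (G x) ⊔ ⨆ F ∈ Q, F x) V hV le_rfl).trans (hWa.trans hab))
end

section
/- Let (X, T) be an L-fuzzy topological space and G ∈ L^X. Then G is L-fuzzy SP-compact if and only if for every a ∈ M(L) and every b ∈ β*(a), every Q_a-cover U of G with T_sp(F) ≥ a for each F ∈ U has a finite subfamily V ⊆ U which is a Q_b-cover of G. -/
/-!
The equivalence reduces to two facts about a completely distributive lattice: every element is the
supremum of the elements way below it (`exists_wayBelow_not_le`), and every element is the supremum
of the coprime elements below it (`exists_coprime_not_le`). Hence, if the left-hand side `e` of the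
compactness inequality were not below the right-hand side `r`, there would be a coprime `a ≤ e` and
a coprime `b ≪ a` with `b ≰ r`. Since `a ≤ e`, the given family is a `Q_a`-cover whose members have
semi-preopenness degree at least `a`, so the covering condition yields a finite subfamily that is a
`Q_b`-cover, which forces `b ≤ r`. The converse unfolds `b ≪ a` on the set of values indexed by
finite subfamilies.
-/

/-!
Common definitions: completely distributive complete lattice `L` with an
order-reversing involution `c`, `L`-subsets `X → L`, the wayBelow relation `≪`,
coprime/prime elements, `L`-(fuzzy) topologies, closure/interior, (Semi-)Preopen
subsets, the `L`-fuzzy Preopen and Semi-Preopen operators, and the various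
compactness / cover / shading / remote-family notions.
-/

variable {L : Type*} [CompletelyDistribLattice L] {X : Type*}

/-- Every element is the supremum of the elements way below it: the form of complete distributivity
used to pass from `a` to `b ≪ a`. -/
theorem exists_wayBelow_not_le_s9 {x y : L} (h : ¬ x ≤ y) : ∃ d, wayBelow d x ∧ ¬ d ≤ y := by
  by_contra! hcon
  apply h
  -- Complete distributivity over all `D` with `x ≤ sSup D`: the infimum of the values of a choice
  -- function on these `D` is way below `x`.
  have h1 : x ≤ ⨅ D : {D : Set L // x ≤ sSup D}, ⨆ d : D.1, (d : L) :=
    le_iInf fun D => D.2.trans (sSup_eq_iSup' D.1).le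
  rw [iInf_iSup_eq] at h1
  refine h1.trans (iSup_le fun f => hcon _ fun D hD => ?_)
  exact ⟨f ⟨D, hD⟩, (f ⟨D, hD⟩).2, iInf_le (fun D => ((f D : D.1) : L)) ⟨D, hD⟩⟩

/-- The order dual of `exists_wayBelow_not_le`: `w` is way above `y` in the dual sense. -/
theorem exists_wayAbove_not_le {x y : L} (h : ¬ x ≤ y) :
    ∃ w, (∀ D : Set L, sInf D ≤ y → ∃ d ∈ D, d ≤ w) ∧ ¬ x ≤ w := by
  by_contra! hcon
  apply h
  have h1 : (⨆ D : {D : Set L // sInf D ≤ y}, ⨅ d : D.1, (d : L)) ≤ y :=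
    iSup_le fun D => (sInf_eq_iInf' D.1).ge.trans D.2
  rw [iSup_iInf_eq] at h1
  refine le_trans (le_iInf fun f => hcon _ fun D hD => ?_) h1
  exact ⟨f ⟨D, hD⟩, (f ⟨D, hD⟩).2, le_iSup (fun D => ((f D : D.1) : L)) ⟨D, hD⟩⟩

/-- Coprime elements are sup-dense. Iterating `exists_wayAbove_not_le` from `y` gives an increasing
sequence of elements not above `x` that generates an ideal containing `y` but not `x`; the
complement of this ideal is closed under infima of chains, and its minimal elements are coprime. -/
theorem exists_coprime_not_le {x y : L} (h : ¬ x ≤ y) :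
    ∃ p, IsCoprimeElem p ∧ p ≤ x ∧ ¬ p ≤ y := by
  choose g hg hgx using fun w : {w : L // ¬ x ≤ w} => exists_wayAbove_not_le w.2
  let u : ℕ → {w : L // ¬ x ≤ w} := fun n => (fun w => ⟨g w, hgx w⟩)^[n] ⟨y, h⟩
  have hu : ∀ n, ((u (n + 1) : {w : L // ¬ x ≤ w}) : L) = g (u n) := fun n => by
    simp only [u, Function.iterate_succ_apply']
  have hstep : ∀ n, ∀ D : Set L, sInf D ≤ (u n : L) → ∃ d ∈ D, d ≤ (u (n + 1) : L) :=
    fun n D hD => by rw [hu]; exact hg _ D hD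
  have hmono : Monotone fun n => (u n : L) := monotone_nat_of_le_succ fun n => by
    obtain ⟨d, hd, hle⟩ := hstep n {(u n : L)} (by simp)
    exact (Set.mem_singleton_iff.1 hd).ge.trans hle
  -- Zorn's lemma in the order dual gives `m ≤ x` minimal outside the ideal generated by `u`.
  obtain ⟨m, hmx, hm⟩ := @zorn_le_nonempty₀ Lᵒᵈ _
    {z | ∀ n, ¬ (OrderDual.ofDual z) ≤ (u n : L)} (by
      intro C hC _ z _
      refine ⟨OrderDual.toDual (sInf (OrderDual.toDual ⁻¹' C)), fun n hn => ?_, fun z hz => ?_⟩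
      · obtain ⟨d, hd, hle⟩ := hstep n _ hn
        exact hC hd (n + 1) hle
      · exact sInf_le (α := L) hz) (OrderDual.toDual x) (fun n => (u n).2)
  have hmI : ∀ n, ¬ (OrderDual.ofDual m) ≤ (u n : L) := hm.1
  have hmin : ∀ q : L, q ≤ OrderDual.ofDual m → (∀ n, ¬ q ≤ (u n : L)) →
      OrderDual.ofDual m ≤ q := fun q hq hqI => hm.2 (y := OrderDual.toDual q) hqI hq
  refine ⟨OrderDual.ofDual m, ⟨fun hbot => hmI 0 (hbot ▸ bot_le), fun p q hpq => ?_⟩, hmx, hmI 0⟩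
  by_contra! hcon
  have aux : ∀ r : L, ¬ OrderDual.ofDual m ≤ r → ∃ n, OrderDual.ofDual m ⊓ r ≤ (u n : L) := by
    intro r hr
    by_contra! hI
    exact hr ((hmin _ inf_le_left hI).trans inf_le_right)
  obtain ⟨i, hi⟩ := aux p hcon.1
  obtain ⟨j, hj⟩ := aux q hcon.2
  apply hmI (max i j)
  calc OrderDual.ofDual m ≤ OrderDual.ofDual m ⊓ (p ⊔ q) := le_inf le_rfl hpq
    _ = (OrderDual.ofDual m ⊓ p) ⊔ (OrderDual.ofDual m ⊓ q) := inf_sup_left _ _ _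
    _ ≤ _ := sup_le (hi.trans (hmono (le_max_left i j))) (hj.trans (hmono (le_max_right i j)))

theorem stmt9 (c : L → L) (hc_inv : ∀ a : L, c (c a) = a)
    (hc_anti : ∀ a b : L, a ≤ b → c b ≤ c a) (T : (X → L) → L) (hT : IsLFuzzyTopology T) (G : X → L) :
    LFuzzySPCompact c T G ↔
      ∀ a : L, IsCoprimeElem a → ∀ b : L, wayBelow b a → IsCoprimeElem b →
        ∀ U : Set (X → L), QCover c a G U → (∀ F ∈ U, a ≤ spOp c T F) →
          ∃ V : Finset (X → L), ↑V ⊆ U ∧ QCover c b G ↑V := by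
  constructor
  · intro hG a _ b hba _ U hU hF
    have h1 := (le_inf (le_iInf₂ hF) (le_iInf hU)).trans (hG U)
    rw [iSup_subtype'] at h1
    obtain ⟨_, ⟨Q, rfl⟩, hQ⟩ := hba _ h1
    exact ⟨Q.1, Q.2, fun x => hQ.trans (iInf_le _ x)⟩
  · intro hcov P
    by_contra hnot
    obtain ⟨a, ha, hae, har⟩ := exists_coprime_not_le hnot
    obtain ⟨d, hda, hdr⟩ := exists_wayBelow_not_le_s9 har
    obtain ⟨b, hb, hbd, hbr⟩ := exists_coprime_not_le hdr
    have hba : wayBelow b a := fun D hD =>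
      let ⟨z, hz, hdz⟩ := hda D hD
      ⟨z, hz, hbd.trans hdz⟩
    obtain ⟨V, hVP, hV⟩ := hcov a ha b hba hb P
      (fun x => hae.trans (inf_le_right.trans (iInf_le _ x)))
      (fun F hF => hae.trans (inf_le_left.trans (iInf₂_le F hF)))
    exact hbr (le_iSup₂_of_le V hVP (le_iInf hV))
end
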